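/- Pointwise version of the lemma 'if η = 0 then χ^S = 0': let φ ∈ ℝ⁸ be a unit spinor, S : ℝ⁶ → ℝ⁶ any linear map, and for each X ∈ ℝ⁶ define ξ_X ∈ End(ℝ⁶) by ⟨ξ_X Y, Z⟩ = ψ_φ(S(X), Y, Z) for all Y, Z ∈ ℝ⁶, where ψ_φ(X,Y,Z) = −⟨c(X)·c(Y)·c(Z)·φ, φ⟩. Then χ^S := Σᵢ ξ_{uᵢ}(S(uᵢ)) = 0, where u₁,…,u₆ is the standard orthonormal basis of ℝ⁶. -/

import Mathlib

/- STATEMENT 15: (pointwise Lemma "η = 0 ⟹ χ^S = 0") Let φ ∈ ℝ⁸ be a unit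
spinor, S : ℝ⁶ → ℝ⁶ linear, and ξ_X defined by ⟨ξ_X Y, Z⟩ = ψ_φ(S X, Y, Z) where
ψ_φ(X,Y,Z) = −⟨c(X)·c(Y)·c(Z)·φ, φ⟩. Then χ^S = Σᵢ ξ_{uᵢ}(S uᵢ) = 0. -/

open Matrix
open scoped RealInnerProductSpace

noncomputable section

namespace Stmt15

def E (i j : Fin 8) : Matrix (Fin 8) (Fin 8) ℝ :=
  Matrix.of fun k l => if k = i ∧ l = j then (-1 : ℝ) else if k = j ∧ l = i then 1 else 0

def e : Fin 6 → Matrix (Fin 8) (Fin 8) ℝ :=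
  ![E 0 7 + E 1 6 - E 2 5 - E 3 4,
    -E 0 6 + E 1 7 + E 2 4 - E 3 5,
    -E 0 5 + E 1 4 - E 2 7 + E 3 6,
    -E 0 4 - E 1 5 - E 2 6 - E 3 7,
    -E 0 2 - E 1 3 + E 4 6 + E 5 7,
    E 0 3 - E 1 2 - E 4 7 + E 5 6]

abbrev V8 := EuclideanSpace ℝ (Fin 8)
abbrev V6 := EuclideanSpace ℝ (Fin 6)

def c (X : V6) : Matrix (Fin 8) (Fin 8) ℝ := ∑ a, X a • e a

def act (M : Matrix (Fin 8) (Fin 8) ℝ) (ψ : V8) : V8 :=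
  (EuclideanSpace.equiv (Fin 8) ℝ).symm (M.mulVec (EuclideanSpace.equiv (Fin 8) ℝ ψ))

/-- The 3-form `ψ_φ(X,Y,Z) = −⟨c(X)·c(Y)·c(Z)·φ, φ⟩`. -/
def ψf (φ : V8) (X Y Z : V6) : ℝ := -⟪act (c X) (act (c Y) (act (c Z) φ)), φ⟫

/-- The standard orthonormal basis `u₁, …, u₆` of `ℝ⁶` (0-based). -/
def u (i : Fin 6) : V6 := EuclideanSpace.single i 1

/-! The Clifford relation `c(W)² = -‖W‖²` gives `ψ_φ(W, W, Z) = ‖W‖² ⟨c(Z)·φ, φ⟩`, which vanishes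
because `c(Z)` is skew-symmetric. Taking `W = S X` shows that `ξ_X (S X) = 0` for each `X`, so
`χ^S` vanishes term by term. -/

theorem inner_toEuclideanLin_self_of_transpose_eq_neg {n : Type*} [Fintype n] [DecidableEq n]
    {A : Matrix n n ℝ} (hA : Aᵀ = -A) (x : EuclideanSpace ℝ n) :
    ⟪A.toEuclideanLin x, x⟫ = 0 := by
  have inner_eq_neg_inner : ⟪A.toEuclideanLin x, x⟫ = -⟪A.toEuclideanLin x, x⟫ :=
    calc ⟪A.toEuclideanLin x, x⟫ = ⟪x, Aᵀ.toEuclideanLin x⟫ := by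
          rw [← conjTranspose_eq_transpose_of_trivial, toEuclideanLin_conjTranspose_eq_adjoint,
            LinearMap.adjoint_inner_right]
      _ = -⟪A.toEuclideanLin x, x⟫ := by
          rw [hA, map_neg, LinearMap.neg_apply, inner_neg_right, real_inner_comm]
  exact self_eq_neg.mp inner_eq_neg_inner

theorem E_eq_single_sub_single {i j : Fin 8} (hij : i ≠ j) :
    E i j = single j i 1 - single i j 1 := by
  ext k l
  simp only [E, of_apply, Matrix.sub_apply, single_apply]
  grind

theorem E_transpose {i j : Fin 8} (hij : i ≠ j) : (E i j)ᵀ = -E i j := by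
  simp only [E_eq_single_sub_single hij, transpose_sub, transpose_single, neg_sub]

theorem E_mulVec {i j : Fin 8} (hij : i ≠ j) (v : Fin 8 → ℝ) :
    E i j *ᵥ v = Pi.single j (v i) - Pi.single i (v j) := by
  rw [E_eq_single_sub_single hij, sub_mulVec, single_mulVec, single_mulVec, one_mul, one_mul]
  rfl

theorem e_transpose (a : Fin 6) : (e a)ᵀ = -e a := by
  fin_cases a <;>
    simp (disch := decide) only [e, Fin.reduceFinMk, cons_val, transpose_add, transpose_sub,
      transpose_neg, E_transpose] <;>
    abel

theorem c_transpose (W : V6) : (c W)ᵀ = -c W := by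
  simp only [c, transpose_sum, transpose_smul, e_transpose, smul_neg, Finset.sum_neg_distrib]

theorem c_mulVec (W : V6) (v : Fin 8 → ℝ) :
    c W *ᵥ v =
      ![W 4 * v 2 - W 5 * v 3 + W 3 * v 4 + W 2 * v 5 + W 1 * v 6 - W 0 * v 7,
        W 5 * v 2 + W 4 * v 3 - W 2 * v 4 + W 3 * v 5 - W 0 * v 6 - W 1 * v 7,
        -W 4 * v 0 - W 5 * v 1 - W 1 * v 4 + W 0 * v 5 + W 3 * v 6 + W 2 * v 7,
        W 5 * v 0 - W 4 * v 1 + W 0 * v 4 + W 1 * v 5 - W 2 * v 6 + W 3 * v 7,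
        -W 3 * v 0 + W 2 * v 1 + W 1 * v 2 - W 0 * v 3 - W 4 * v 6 + W 5 * v 7,
        -W 2 * v 0 - W 3 * v 1 - W 0 * v 2 - W 1 * v 3 - W 5 * v 6 - W 4 * v 7,
        -W 1 * v 0 + W 0 * v 1 - W 3 * v 2 + W 2 * v 3 + W 4 * v 4 + W 5 * v 5,
        W 0 * v 0 + W 1 * v 1 - W 2 * v 2 - W 3 * v 3 - W 5 * v 4 + W 4 * v 5] := by
  simp (disch := decide) only [c, e, Fin.sum_univ_six, cons_val, smul_mulVec, add_mulVec,
    sub_mulVec, neg_mulVec, E_mulVec]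
  ext k
  fin_cases k <;>
    simp only [Pi.add_apply, Pi.sub_apply, Pi.neg_apply, Pi.smul_apply, Pi.single_apply,
      Fin.reduceFinMk, Fin.reduceEq, if_true, if_false, smul_eq_mul, cons_val] <;>
    ring

theorem c_mul_self (W : V6) : c W * c W = -(‖W‖ ^ 2) • 1 := by
  refine mulVec_injective (funext fun v => ?_)
  rw [← mulVec_mulVec, c_mulVec, c_mulVec, EuclideanSpace.real_norm_sq_eq, Fin.sum_univ_six,
    smul_mulVec, one_mulVec]
  ext k
  fin_cases k <;> simp only [Fin.reduceFinMk, cons_val, Pi.smul_apply, smul_eq_mul] <;> ring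

theorem act_eq_toEuclideanLin (M : Matrix (Fin 8) (Fin 8) ℝ) (ψ : V8) :
    act M ψ = M.toEuclideanLin ψ := rfl

theorem act_c_act_c_self (W : V6) (ψ : V8) : act (c W) (act (c W) ψ) = -(‖W‖ ^ 2) • ψ := by
  simp only [act_eq_toEuclideanLin]
  rw [← LinearMap.comp_apply, ← toLpLin_mul_same, c_mul_self, map_smul, toLpLin_one,
    LinearMap.smul_apply, LinearMap.id_apply]

theorem ψf_self_left (φ : V8) (W Z : V6) : ψf φ W W Z = 0 := by
  rw [ψf, act_c_act_c_self, real_inner_smul_left, act_eq_toEuclideanLin,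
    inner_toEuclideanLin_self_of_transpose_eq_neg (c_transpose Z), mul_zero, neg_zero]

theorem chiS_vanishes_general (φ : V8) (S : V6 → V6) (ξ : V6 → V6 → V6)
    (hξ : ∀ X Y Z : V6, ⟪ξ X Y, Z⟫ = ψf φ (S X) Y Z) (X : V6) :
    ξ X (S X) = 0 := by
  refine ext_inner_right ℝ fun Z => ?_
  rw [hξ, ψf_self_left, inner_zero_left]

theorem chiS_vanishes (φ : V8) (hφ : ‖φ‖ = 1) (S : V6 →ₗ[ℝ] V6)
    (ξ : V6 → V6 → V6)
    (hξ : ∀ X Y Z : V6, ⟪ξ X Y, Z⟫ = ψf φ (S X) Y Z) :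
    ∑ i : Fin 6, ξ (u i) (S (u i)) = 0 :=
  Finset.sum_eq_zero fun i _ => chiS_vanishes_general φ S ξ hξ (u i)

end Stmt15
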